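/- Let d ≥ 1, let H be a finite intersecting hypergraph of d-intervals (every two edges of H intersect), and let w : E(H) → ℕ be a weight system on the edges of H. Then τ_w(H) ≤ d²·ν_w(H). -/

import Mathlib

/-- A `d`-interval: a union of at most `d` pairwise disjoint closed intervals
on the real line. -/
def IsDInterval (d : ℕ) (h : Set ℝ) : Prop :=
  ∃ (n : ℕ) (a b : Fin n → ℝ), n ≤ d ∧ (∀ i, a i ≤ b i) ∧
    (Set.univ : Set (Fin n)).PairwiseDisjoint (fun i => Set.Icc (a i) (b i)) ∧
    h = ⋃ i, Set.Icc (a i) (b i)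

/-- The weighted matching number `ν_w`: the maximum of `∑_{e ∈ M} w e` over
matchings `M` in `H`. -/
noncomputable def nuW {α : Type*} (H : Set (Set α)) (w : Set α → ℕ) : ℕ :=
  sSup {m | ∃ M : Finset (Set α), ↑M ⊆ H ∧
    (M : Set (Set α)).PairwiseDisjoint id ∧ m = ∑ e ∈ M, w e}

/-- The weighted covering number `τ_w`: the minimum of `∑ₓ g x` over finitely
supported `g : α → ℕ` with `∑_{x ∈ e} g x ≥ w e` for every edge `e`. -/
noncomputable def tauW {α : Type*} (H : Set (Set α)) (w : Set α → ℕ) : ℕ :=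
  sInf {m | ∃ g : α → ℕ, (Function.support g).Finite ∧
    (∀ e ∈ H, w e ≤ ∑ᶠ x ∈ e, g x) ∧ m = ∑ᶠ x, g x}

/-!
Cut a segment containing all edges at `d ^ 2` interior points. Suppose some edges avoid all cuts.
Each of these meets at most `d` of the `d ^ 2 + 1` open pieces, and any two of them share a piece.
Let such an edge put, on every piece it meets, a weight equal to its distance from the cuts. These
weights depend continuously on the cuts, so by the Knaster-Kuratowski-Mazurkiewicz lemma the cuts
can be chosen so that all pieces carry the same total weight. Double counting then bounds the number
of pieces by `d ^ 2`, a contradiction. So `d ^ 2` points meet every edge, and giving each of them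
the weight `ν_w` yields a cover.
-/

theorem card_filter_image_erase_eq_two {A B : Type*} [DecidableEq A] [DecidableEq B]
    {s : Finset A} {f : A → B} (h : (s.image f).card + 1 = s.card) :
    (s.filter fun a => (s.erase a).image f = s.image f).card = 2 := by
  obtain ⟨a, ha, b, hb, hab, hfab⟩ := Finset.exists_ne_map_eq_of_card_lt_of_maps_to
    (t := s.image f) (by omega) fun x hx => Finset.mem_image_of_mem f hx
  have image_erase_of_twin : ∀ x ∈ s, ∀ y ∈ s, x ≠ y → f x = f y →
      (s.erase x).image f = s.image f := fun x hx y hy hxy hf => by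
    nth_rw 2 [← Finset.insert_erase hx]
    rw [Finset.image_insert, hf, Finset.insert_eq_of_mem]
    exact Finset.mem_image_of_mem f (Finset.mem_erase.2 ⟨hxy.symm, hy⟩)
  suffices s.filter (fun x => (s.erase x).image f = s.image f) = {a, b} by
    rw [this, Finset.card_pair hab]
  ext x
  rw [Finset.mem_filter, Finset.mem_insert, Finset.mem_singleton]
  constructor
  · rintro ⟨hx, himage⟩
    have hinj : Set.InjOn f (s.erase x) :=
      Finset.card_image_iff.1 (by rw [himage, Finset.card_erase_of_mem hx]; omega)
    by_contra! hne
    exact hab (hinj (Finset.mem_erase.2 ⟨hne.1.symm, ha⟩) (Finset.mem_erase.2 ⟨hne.2.symm, hb⟩)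
      hfab)
  · rintro (rfl | rfl)
    · exact ⟨ha, image_erase_of_twin _ ha _ hb hab hfab⟩
    · exact ⟨hb, image_erase_of_twin _ hb _ ha hab.symm hfab.symm⟩

namespace Scarf

variable {X Y I α : Type*} [LinearOrder α]

/-- A finite set `S` is dominant for the rankings `r i` if every element is ranked weakly below all
of `S` by at least one of them. These are the simplices of Scarf's complex. -/
def IsDominant (r : I → Y → α) (S : Finset Y) : Prop :=
  ∀ y, ∃ i, ∀ s ∈ S, r i y ≤ r i s

theorem IsDominant.mono {r : I → Y → α} {S T : Finset Y} (hT : IsDominant r T) (hST : S ⊆ T) :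
    IsDominant r S := fun y =>
  let ⟨i, hi⟩ := hT y
  ⟨i, fun s hs => hi s (hST hs)⟩

/-- The elements that every ranking other than `r i` places above the minimum of `D`: the candidates
for extending the facet `D` in direction `i`. -/
def exchangeSet (r : I → Y → α) (D : Finset Y) (i : I) : Set Y :=
  {y | ∀ j ≠ i, ∃ s ∈ D, r j s < r j y}

theorem eq_of_mem_exchangeSet {r : I → Y → α} {D : Finset Y} {i k : I} {y : Y}
    (hy : y ∈ exchangeSet r D i) (hk : ∀ s ∈ D, r k y ≤ r k s) : k = i := by
  by_contra hki
  obtain ⟨s, hs, hlt⟩ := hy k hki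
  exact hlt.not_ge (hk s hs)

theorem IsDominant.insert_of_isMaxOn [DecidableEq Y] {r : I → Y → α} {D : Finset Y}
    (hD : IsDominant r D) {i : I} {y : Y} (hy : y ∈ exchangeSet r D i)
    (hmax : IsMaxOn (r i) (exchangeSet r D i) y) : IsDominant r (insert y D) := by
  intro z
  simp only [Finset.forall_mem_insert]
  by_cases hz : z ∈ exchangeSet r D i
  · obtain ⟨k, hk⟩ := hD y
    obtain rfl := eq_of_mem_exchangeSet hy hk
    exact ⟨k, hmax hz, fun s hs => (hmax hz).trans (hk s hs)⟩
  · simp only [exchangeSet, Set.mem_ofPred_eq, not_forall, not_exists, not_and, not_lt] at hz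
    obtain ⟨j, hji, hj⟩ := hz
    obtain ⟨s, hs, hlt⟩ := hy j hji
    exact ⟨j, (hj s hs).trans hlt.le, hj⟩

theorem IsDominant.exists_isMaxOn_of_insert [DecidableEq Y] [Fintype I]
    {r : I → Y → α} (hr : ∀ i, Function.Injective (r i)) {D : Finset Y}
    (hcard : D.card + 1 = Fintype.card I) {y : Y} (hy : y ∉ D) (h : IsDominant r (insert y D)) :
    ∃ i, y ∈ exchangeSet r D i ∧ IsMaxOn (r i) (exchangeSet r D i) y ∧
      ∀ s ∈ D, ∃ j ≠ i, ∀ t ∈ D, r j s ≤ r j t := by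
  classical
  obtain ⟨i, hi⟩ := h y
  choose m hm using h
  simp only [Finset.forall_mem_insert] at hi hm
  have hm_lt : ∀ s ∈ D, r (m s) s < r (m s) y := fun s hs =>
    (hm s).1.lt_of_ne fun heq => hy (hr _ heq ▸ hs)
  have hm_ne : ∀ s ∈ D, m s ≠ i := fun s hs hmi =>
    (hm_lt s hs).not_ge (hmi ▸ hi.2 s hs)
  have hm_inj : Set.InjOn m D := fun s hs t ht hst =>
    hr (m s) (((hm s).2 t ht).antisymm (hst ▸ (hm t).2 s hs))
  have hm_image : D.image m = Finset.univ.erase i := by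
    refine Finset.eq_of_subset_of_card_le (fun j hj => ?_) ?_
    · obtain ⟨s, hs, rfl⟩ := Finset.mem_image.1 hj
      exact Finset.mem_erase.2 ⟨hm_ne s hs, Finset.mem_univ _⟩
    · rw [Finset.card_image_of_injOn hm_inj, Finset.card_erase_of_mem (Finset.mem_univ i),
        Finset.card_univ]
      omega
  refine ⟨i, fun j hji => ?_, fun z hz => ?_, fun s hs => ⟨m s, hm_ne s hs, (hm s).2⟩⟩
  · obtain ⟨s, hs, rfl⟩ := Finset.mem_image.1
      (hm_image ▸ Finset.mem_erase.2 ⟨hji, Finset.mem_univ j⟩)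
    exact ⟨s, hs, hm_lt s hs⟩
  · suffices m z = i from this ▸ (hm z).1
    by_contra hne
    obtain ⟨s, hs, hlt⟩ := hz _ hne
    exact hlt.not_ge ((hm z).2 s hs)

open scoped Classical in
/-- The vertices `y` whose addition to the facet `D` yields a simplex of Scarf's complex. -/
noncomputable def extensions [Fintype Y] [DecidableEq Y] (r : I → Y → α) (D : Finset Y) :
    Finset Y :=
  Finset.univ.filter fun y => y ∉ D ∧ IsDominant r (insert y D)

theorem IsDominant.card_extensions_eq_two [Fintype Y] [DecidableEq Y] [Fintype I]
    {r : I → Y → α} (hr : ∀ i, Function.Injective (r i)) {D : Finset Y} (hD : IsDominant r D)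
    (hne : D.Nonempty) (hcard : D.card + 1 = Fintype.card I)
    (hexch : ∀ i, (exchangeSet r D i).Nonempty) : (extensions r D).card = 2 := by
  classical
  choose μ hμD hμ using fun i => D.exists_min_image (r i) hne
  choose top htop htop_max using fun i =>
    Set.exists_max_image (exchangeSet r D i) (r i) (Set.toFinite _) (hexch i)
  have hμ_eq : ∀ {i s}, s ∈ D → (∀ t ∈ D, r i s ≤ r i t) → μ i = s := fun hs hle =>
    hr _ ((hμ _ _ hs).antisymm (hle _ (hμD _)))
  have hμ_image : Finset.univ.image μ = D := by
    ext s
    simp only [Finset.mem_image, Finset.mem_univ, true_and]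
    exact ⟨fun ⟨i, hi⟩ => hi ▸ hμD i, fun hs => (hD s).imp fun i => hμ_eq hs⟩
  -- As `|I| = |D| + 1`, exactly two rankings share their minimum in `D` with another one, and `D`
  -- has one extension in each of these two directions.
  have htwo := card_filter_image_erase_eq_two (s := Finset.univ) (f := μ)
    (by rw [hμ_image, hcard, Finset.card_univ])
  rw [hμ_image] at htwo
  rw [← htwo]
  refine (Finset.card_bij (fun i _ => top i) (fun i hi => ?_) (fun i _ j _ hij => ?_)
    fun y hy => ?_).symm
  · have himage := (Finset.mem_filter.1 hi).2
    refine Finset.mem_filter.2 ⟨Finset.mem_univ _, fun hmem => ?_,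
      hD.insert_of_isMaxOn (htop i) (htop_max i)⟩
    obtain ⟨j, hj, hμj⟩ := Finset.mem_image.1 (himage ▸ hmem)
    obtain ⟨s, hs, hlt⟩ := htop i j (Finset.ne_of_mem_erase hj)
    exact hlt.not_ge (hμj ▸ hμ j s hs)
  · obtain ⟨k, hk⟩ := hD (top i)
    exact (eq_of_mem_exchangeSet (htop i) hk).symm.trans
      (eq_of_mem_exchangeSet (hij ▸ htop j) hk)
  · obtain ⟨hyD, hy⟩ := (Finset.mem_filter.1 hy).2
    obtain ⟨i, hyi, hmax, hsurj⟩ := hy.exists_isMaxOn_of_insert hr hcard hyD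
    refine ⟨i, Finset.mem_filter.2 ⟨Finset.mem_univ _, ?_⟩,
      hr i ((hmax (htop i)).antisymm (htop_max i y hyi))⟩
    refine (Finset.image_subset_iff.2 fun j _ => hμD j).antisymm fun s hs => ?_
    obtain ⟨j, hji, hj⟩ := hsurj s hs
    exact Finset.mem_image.2 ⟨j, Finset.mem_erase.2 ⟨hji, Finset.mem_univ _⟩, hμ_eq hs hj⟩

theorem even_card_extensions [Fintype Y] [DecidableEq Y] [Fintype I] {r : I → Y → α}
    (hr : ∀ i, Function.Injective (r i)) {D : Finset Y} (hne : D.Nonempty)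
    (hcard : D.card + 1 = Fintype.card I) (hexch : ∀ i, (exchangeSet r D i).Nonempty) :
    Even (extensions r D).card := by
  classical
  by_cases hD : IsDominant r D
  · exact hD.card_extensions_eq_two hr hne hcard hexch ▸ even_two
  · have : extensions r D = ∅ := Finset.filter_eq_empty_iff.2 fun y _ hy =>
      hD (hy.2.mono (Finset.subset_insert y D))
    simp [this]

theorem even_card_filter_image_erase_eq [DecidableEq Y] [Fintype I] [DecidableEq I] {c : Y → I}
    (i₀ : I) {S : Finset Y} (hS : S.card = Fintype.card I) (hc : S.image c ≠ Finset.univ) :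
    Even (S.filter fun y => (S.erase y).image c = Finset.univ.erase i₀).card := by
  by_cases himage : S.image c = Finset.univ.erase i₀
  · rw [← himage, card_filter_image_erase_eq_two]
    · exact even_two
    · rw [himage, hS, Finset.card_erase_add_one (Finset.mem_univ _), Finset.card_univ]
  · suffices S.filter (fun y => (S.erase y).image c = Finset.univ.erase i₀) = ∅ by simp [this]
    refine Finset.filter_eq_empty_iff.2 fun y _ hy => ?_
    have hsub : Finset.univ.erase i₀ ⊆ S.image c :=
      hy ▸ Finset.image_subset_image (S.erase_subset y)
    grind

/-- The sets of `|I| - 1` vertices carrying every colour except `i₀`: the doors of the parity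
argument. -/
def doors [Fintype Y] [Fintype I] [DecidableEq I] (c : Y → I) (i₀ : I) : Finset (Finset Y) :=
  {D | D.card + 1 = Fintype.card I ∧ D.image c = Finset.univ.erase i₀}

theorem exists_isDominant_image_eq_univ [Fintype Y] [DecidableEq Y] [Fintype I] [DecidableEq I]
    (r : I → Y → α) (c : Y → I) (i₀ : I)
    (hodd : Odd (∑ D ∈ doors c i₀, (extensions r D).card)) :
    ∃ S, IsDominant r S ∧ S.image c = Finset.univ := by
  classical
  by_contra! hc
  let rooms : Finset (Finset Y) := {S | S.card = Fintype.card I ∧ IsDominant r S}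
  let removals (S : Finset Y) := S.filter fun y => (S.erase y).image c = Finset.univ.erase i₀
  -- Both sides count the pairs of a dominant set and a point of it whose removal leaves a door.
  have hcount : ∑ D ∈ doors c i₀, (extensions r D).card = ∑ S ∈ rooms, (removals S).card := by
    rw [← Finset.card_sigma, ← Finset.card_sigma]
    refine Finset.card_bij' (fun p _ => ⟨insert p.2 p.1, p.2⟩) (fun p _ => ⟨p.1.erase p.2, p.2⟩)
      ?_ ?_ ?_ ?_ <;> rintro ⟨T, y⟩ <;>
    · simp only [Finset.mem_sigma, doors, extensions, rooms, removals, Finset.mem_filter]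
      grind [Finset.insert_erase, Finset.erase_insert]
  refine Nat.not_even_iff_odd.2 hodd (hcount ▸ Finset.even_sum _ fun S hS => ?_)
  obtain ⟨hcard, hdom⟩ := (Finset.mem_filter.1 hS).2
  exact even_card_filter_image_erase_eq i₀ hcard (hc S hdom)

/-- The rankings `r i` on `X` extended to `X ⊕ I` by one slack vertex `Sum.inr k` per ranking: it is
the bottom of ranking `k` and lies above `X` in every other ranking. -/
noncomputable def slackRank [Fintype I] [DecidableEq I] (r : I → X → α) (i : I) :
    X ⊕ I → WithBot (α ⊕ₗ Fin (Fintype.card I))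
  | Sum.inl x => ↑(Sum.inlₗ (r i x) : α ⊕ₗ Fin (Fintype.card I))
  | Sum.inr k =>
    if k = i then ⊥ else ↑(Sum.inrₗ (Fintype.equivFin I k) : α ⊕ₗ Fin (Fintype.card I))

section slackRank

variable [Fintype I] [DecidableEq I] {r : I → X → α} {i k : I} {x y : X}

theorem slackRank_inl_le_inl :
    slackRank r i (Sum.inl x) ≤ slackRank r i (Sum.inl y) ↔ r i x ≤ r i y := by
  simp [slackRank]

theorem slackRank_inr_self_lt_inl :
    slackRank r i (Sum.inr i) < slackRank r i (Sum.inl x) := by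
  simp [slackRank]

theorem slackRank_inl_lt_inr (hki : k ≠ i) :
    slackRank r i (Sum.inl x) < slackRank r i (Sum.inr k) := by
  simp [slackRank, hki]

theorem slackRank_injective {β : Type*} {r : I → X → β} (hr : Function.Injective (r i)) :
    Function.Injective (slackRank r i) := by
  rintro (x | k) (y | l) h <;> simp only [slackRank] at h
  · exact congrArg _ (hr (by simpa using h))
  all_goals split_ifs at h <;> simp_all

/-- The slack vertices of all rankings but `i₀`. -/
def slackDoor (X : Type*) [DecidableEq X] (i₀ : I) : Finset (X ⊕ I) :=
  (Finset.univ.erase i₀).image Sum.inr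

variable [DecidableEq X]

theorem inl_notMem_slackDoor {i₀ : I} : Sum.inl x ∉ slackDoor X i₀ := by
  simp [slackDoor]

theorem inr_mem_slackDoor {i₀ : I} : Sum.inr k ∈ slackDoor X i₀ ↔ k ≠ i₀ := by
  simp [slackDoor]

theorem isDominant_insert_inl_slackDoor {i₀ : I} :
    IsDominant (slackRank r) (insert (Sum.inl x) (slackDoor X i₀)) ↔ ∀ y, r i₀ y ≤ r i₀ x := by
  constructor
  · intro h y
    obtain ⟨i, hi⟩ := h (Sum.inl y)
    rw [Finset.forall_mem_insert] at hi
    obtain rfl : i = i₀ := by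
      by_contra hne
      exact slackRank_inr_self_lt_inl.not_ge (hi.2 _ (inr_mem_slackDoor.2 hne))
    exact slackRank_inl_le_inl.1 hi.1
  · rintro h (y | k)
    · refine ⟨i₀, (Finset.forall_mem_insert ..).2 ⟨slackRank_inl_le_inl.2 (h y), ?_⟩⟩
      rintro (z | k) hz
      · exact absurd hz inl_notMem_slackDoor
      · exact (slackRank_inl_lt_inr (inr_mem_slackDoor.1 hz)).le
    · exact ⟨k, fun s _ => by simp [slackRank]⟩

theorem not_isDominant_insert_inr_slackDoor [Nonempty X] {i₀ : I} :
    ¬ IsDominant (slackRank r) (insert (Sum.inr i₀) (slackDoor X i₀)) := by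
  intro h
  obtain ⟨i, hi⟩ := h (Sum.inl (Classical.arbitrary X))
  rw [Finset.forall_mem_insert] at hi
  rcases eq_or_ne i i₀ with rfl | hne
  · exact slackRank_inr_self_lt_inl.not_ge hi.1
  · exact slackRank_inr_self_lt_inl.not_ge (hi.2 _ (inr_mem_slackDoor.2 hne))

theorem card_extensions_slackDoor [Fintype X] [Nonempty X] (hr : ∀ i, Function.Injective (r i))
    (i₀ : I) : (extensions (slackRank r) (slackDoor X i₀)).card = 1 := by
  obtain ⟨top, htop⟩ := Finite.exists_max (r i₀)
  suffices extensions (slackRank r) (slackDoor X i₀) = {Sum.inl top} by simp [this]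
  ext (x | k)
  · simp only [extensions, Finset.mem_filter, Finset.mem_univ, inl_notMem_slackDoor,
      not_false_eq_true, isDominant_insert_inl_slackDoor, true_and, Finset.mem_singleton,
      Sum.inl.injEq]
    exact ⟨fun hx => hr i₀ ((htop x).antisymm (hx top)), fun hx => hx ▸ htop⟩
  · simp only [extensions, Finset.mem_filter, Finset.mem_univ, inr_mem_slackDoor, true_and,
      Finset.mem_singleton, reduceCtorEq, iff_false, not_and, ne_eq, not_not]
    rintro rfl
    exact not_isDominant_insert_inr_slackDoor

theorem even_card_extensions_slackRank [Fintype X] (hr : ∀ i, Function.Injective (r i))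
    {D : Finset (X ⊕ I)} (hcard : D.card + 1 = Fintype.card I) (hx : Sum.inl x ∈ D) :
    Even (extensions (slackRank r) D).card :=
  even_card_extensions (fun i => slackRank_injective (hr i)) ⟨_, hx⟩ hcard fun i =>
    ⟨Sum.inr i, fun _ hji => ⟨_, hx, slackRank_inl_lt_inr hji.symm⟩⟩

theorem odd_sum_card_extensions_slackRank [Fintype X] [Nonempty X]
    (hr : ∀ i, Function.Injective (r i)) (c : X → I) (i₀ : I) :
    Odd (∑ D ∈ doors (Sum.elim c id) i₀, (extensions (slackRank r) D).card) := by
  have hslack : slackDoor X i₀ ∈ doors (Sum.elim c id) i₀ := by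
    simp only [doors, slackDoor, Finset.mem_filter, Finset.mem_univ, true_and,
      Finset.image_image]
    rw [Finset.card_image_of_injective _ Sum.inr_injective,
      Finset.card_erase_add_one (Finset.mem_univ _), Finset.card_univ]
    exact ⟨rfl, Finset.image_id⟩
  rw [← Finset.add_sum_erase _ _ hslack, card_extensions_slackDoor hr]
  refine odd_one.add_even (Finset.even_sum _ fun D hD => ?_)
  obtain ⟨hne, hD⟩ := Finset.mem_erase.1 hD
  obtain ⟨hcard, himage⟩ := (Finset.mem_filter.1 hD).2
  obtain ⟨x, hx⟩ : ∃ x, Sum.inl x ∈ D := by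
    by_contra! hinl
    refine hne (Finset.ext ?_)
    rintro (x | k)
    · simp [hinl, inl_notMem_slackDoor]
    · rw [inr_mem_slackDoor]
      have := congrArg (k ∈ ·) himage
      simpa [hinl] using this
  exact even_card_extensions_slackRank hr hcard hx

end slackRank

-- Scarf's lemma. A dominant set of all colours may contain slack vertices, but they cannot be the
-- ones that witness dominance over a point of `X`, since each is bottom in its own ranking.
theorem exists_finset_forall_exists_mem_forall_le [Finite X] [Finite I] (r : I → X → α)
    (c : X → I) : ∃ σ : Finset X, ∀ y, ∃ z ∈ σ, ∀ x ∈ σ, r (c z) y ≤ r (c z) x := by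
  classical
  cases nonempty_fintype X
  cases nonempty_fintype I
  cases isEmpty_or_nonempty X
  · exact ⟨∅, isEmptyElim⟩
  let r' : I → X → α ×ₗ Fin (Fintype.card X) := fun i x => toLex (r i x, Fintype.equivFin X x)
  have hr' : ∀ i, Function.Injective (r' i) := fun i x y h =>
    (Fintype.equivFin X).injective (Prod.ext_iff.1 (toLex_inj.1 h)).2
  obtain ⟨S, hS, himage⟩ := exists_isDominant_image_eq_univ (slackRank r') (Sum.elim c id)
    (c (Classical.arbitrary X)) (odd_sum_card_extensions_slackRank hr' c _)
  refine ⟨S.toLeft, fun y => ?_⟩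
  obtain ⟨i, hi⟩ := hS (Sum.inl y)
  obtain ⟨z | k, hz, rfl⟩ := Finset.mem_image.1 (himage ▸ Finset.mem_univ i)
  · exact ⟨z, Finset.mem_toLeft.2 hz, fun x hx => Prod.Lex.monotone_fst _ _
      (slackRank_inl_le_inl.1 (hi _ (Finset.mem_toLeft.1 hx)))⟩
  · exact absurd (hi _ hz) slackRank_inr_self_lt_inl.not_ge

end Scarf

section KKM

variable {I : Type*} [Fintype I]

theorem lt_sum_add_card_of_forall_exists_le [Nonempty I] {N : ℕ} {m : I → ℕ}
    (h : ∀ y : I → ℕ, ∑ i, y i = N → ∃ i, y i ≤ m i) : N < ∑ i, m i + Fintype.card I := by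
  classical
  by_contra! hN
  let excess : I → ℕ := Pi.single (Classical.arbitrary I) (N - (∑ i, m i + Fintype.card I))
  obtain ⟨i, hi⟩ := h (fun i => m i + 1 + excess i) (by
    simp only [excess, Finset.sum_add_distrib, Finset.sum_const, Finset.card_univ, smul_eq_mul,
      mul_one, Finset.sum_pi_single', Finset.mem_univ, if_true]
    omega)
  omega

theorem lt_add_of_sum_lt_sum_add {m x : I → ℕ} {n : ℕ} (hle : m ≤ x)
    (hsum : ∑ i, x i < ∑ i, m i + n) (k : I) : x k < m k + n := by
  classical
  have herase := Finset.sum_le_sum fun i (_ : i ∈ Finset.univ.erase k) => hle i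
  simp only [← Finset.add_sum_erase _ _ (Finset.mem_univ k)] at hsum
  omega

theorem exists_forall_lt_card_or_exists_color_eq (c : (I → ℕ) → I) (N : ℕ) :
    ∃ x : I → ℕ, ∑ i, x i = N ∧ ∀ k, x k < Fintype.card I ∨
      ∃ y : I → ℕ, c y = k ∧ ∑ i, y i = N ∧
        ∀ i, x i < y i + Fintype.card I ∧ y i < x i + Fintype.card I := by
  classical
  have : Nonempty I := ⟨c 0⟩
  let grid := Finset.piAntidiag (Finset.univ : Finset I) N
  have mem_grid : ∀ {x}, x ∈ grid ↔ ∑ i, x i = N := by simp [grid]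
  obtain ⟨σ, hσ⟩ := Scarf.exists_finset_forall_exists_mem_forall_le
    (fun i (x : grid) => x.1 i) (fun x => c x)
  obtain ⟨x₀, hx₀, -⟩ := hσ ⟨Pi.single (Classical.arbitrary I) N, mem_grid.2 (by simp)⟩
  let m : I → ℕ := fun k => if ∃ z ∈ σ, c z = k then σ.inf' ⟨x₀, hx₀⟩ (fun x => x.1 k) else 0
  have m_le : ∀ x ∈ σ, ∀ k, m k ≤ x.1 k := fun x hx k => by
    dsimp only [m]
    split_ifs
    · exact Finset.inf'_le _ hx
    · exact Nat.zero_le _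
  have hN : N < ∑ i, m i + Fintype.card I :=
    lt_sum_add_card_of_forall_exists_le fun y hy => by
      obtain ⟨z, hz, hle⟩ := hσ ⟨y, mem_grid.2 hy⟩
      refine ⟨c z, ?_⟩
      simp only [m, if_pos (⟨z, hz, rfl⟩ : ∃ z' ∈ σ, c z' = c z)]
      exact Finset.le_inf' _ _ hle
  have lt_m_add : ∀ x ∈ σ, ∀ k, x.1 k < m k + Fintype.card I := fun x hx =>
    lt_add_of_sum_lt_sum_add (m_le x hx) ((mem_grid.1 x.2).trans_lt hN)
  refine ⟨x₀, mem_grid.1 x₀.2, fun k => or_iff_not_imp_left.2 fun hk => ?_⟩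
  obtain ⟨y, hy, rfl⟩ : ∃ y ∈ σ, c y = k := by
    by_contra hcolor
    have := lt_m_add x₀ hx₀ k
    simp only [m, if_neg hcolor] at this
    omega
  refine ⟨y, rfl, mem_grid.1 y.2, fun i => ?_⟩
  have := m_le y hy i
  have := m_le x₀ hx₀ i
  have := lt_m_add y hy i
  have := lt_m_add x₀ hx₀ i
  omega

theorem exists_mem_stdSimplex_forall_lt_or_dist_lt (c : (I → ℝ) → I) {ε : ℝ} (hε : 0 < ε) :
    ∃ z ∈ stdSimplex ℝ I, ∀ k, z k < ε ∨ ∃ y ∈ stdSimplex ℝ I ∩ c ⁻¹' {k}, dist z y < ε := by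
  obtain ⟨n, hn⟩ := exists_nat_gt (Fintype.card I / ε)
  have hn₀ : (0 : ℝ) < n := (by positivity : 0 ≤ Fintype.card I / ε).trans_lt hn
  have hcard : (Fintype.card I : ℝ) / n < ε := by
    rwa [div_lt_comm₀ hn₀ hε]
  let scale : (I → ℕ) → I → ℝ := fun x i => x i / n
  have scale_mem : ∀ {x : I → ℕ}, ∑ i, x i = n → scale x ∈ stdSimplex ℝ I := fun {x} hx =>
    ⟨fun i => by positivity, by
      rw [← Finset.sum_div, ← Nat.cast_sum, hx, div_self hn₀.ne']⟩
  obtain ⟨x, hx, hnear⟩ := exists_forall_lt_card_or_exists_color_eq (fun x => c (scale x)) n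
  refine ⟨scale x, scale_mem hx, fun k => ?_⟩
  rcases hnear k with hk | ⟨y, hyk, hy, hxy⟩
  · exact Or.inl ((div_lt_div_of_pos_right (Nat.cast_lt.2 hk) hn₀).trans hcard)
  · refine Or.inr ⟨scale y, ⟨scale_mem hy, hyk⟩, (dist_pi_lt_iff hε).2 fun i => ?_⟩
    refine lt_trans ?_ hcard
    rw [Real.dist_eq, ← sub_div, abs_div, abs_of_pos hn₀]
    refine div_lt_div_of_pos_right (abs_sub_lt_iff.2 ⟨?_, ?_⟩) hn₀
    · rw [sub_lt_iff_lt_add']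
      exact_mod_cast (hxy i).1
    · rw [sub_lt_iff_lt_add']
      exact_mod_cast (hxy i).2

-- The Knaster-Kuratowski-Mazurkiewicz lemma. Scarf's lemma replaces Brouwer's theorem: ranking grid
-- points by their coordinates makes a dominant set of them a small cell.
theorem exists_mem_stdSimplex_forall_eq_zero_or_mem_closure (c : (I → ℝ) → I) :
    ∃ z ∈ stdSimplex ℝ I, ∀ k, z k = 0 ∨ z ∈ closure (stdSimplex ℝ I ∩ c ⁻¹' {k}) := by
  choose z hz hnear using fun n : ℕ =>
    exists_mem_stdSimplex_forall_lt_or_dist_lt c (Nat.one_div_pos_of_nat (α := ℝ) (n := n))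
  obtain ⟨p, hp, φ, hφ, hlim⟩ := (isCompact_stdSimplex ℝ I).tendsto_subseq hz
  refine ⟨p, hp, fun k => or_iff_not_imp_right.2 fun hk => ?_⟩
  have hε : Filter.Tendsto (fun n => 1 / ((φ n : ℝ) + 1)) Filter.atTop (nhds 0) :=
    tendsto_one_div_add_atTop_nhds_zero_nat.comp hφ.tendsto_atTop
  obtain ⟨δ, hδ, hfar⟩ : ∃ δ > 0, ∀ y ∈ stdSimplex ℝ I ∩ c ⁻¹' {k}, δ ≤ dist p y := by
    simpa [Metric.mem_closure_iff] using hk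
  have hsmall : ∀ᶠ n in Filter.atTop, z (φ n) k < 1 / ((φ n : ℝ) + 1) := by
    filter_upwards [hε.eventually (gt_mem_nhds (half_pos hδ)),
      Metric.tendsto_nhds.1 hlim _ (half_pos hδ)] with n hεn hzn
    refine (hnear (φ n) k).resolve_right ?_
    rintro ⟨y, hy, hzy⟩
    have := dist_triangle_left p y (z (φ n))
    have := hfar y hy
    simp only [Function.comp_apply] at hzn
    linarith
  exact (le_of_tendsto_of_tendsto ((continuous_apply k).tendsto p |>.comp hlim) hε
    (hsmall.mono fun n h => h.le)).antisymm (hp.1 k)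

theorem exists_mem_stdSimplex_forall_eq [Nonempty I] {g : (I → ℝ) → I → ℝ}
    (hg : ContinuousOn g (stdSimplex ℝ I))
    (hzero : ∀ x ∈ stdSimplex ℝ I, ∀ i, x i = 0 → ∀ j, g x i ≤ g x j) :
    ∃ x ∈ stdSimplex ℝ I, ∃ a, ∀ i, g x i = a := by
  choose c hc using fun x => Finite.exists_min (g x)
  obtain ⟨x, hx, hcolor⟩ := exists_mem_stdSimplex_forall_eq_zero_or_mem_closure c
  have hle : ∀ i j, g x i ≤ g x j := fun i j => by
    rcases hcolor i with hi | hi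
    · exact hzero x hx i hi j
    · have hcont : ∀ k, ContinuousWithinAt (fun y => g y k) (stdSimplex ℝ I ∩ c ⁻¹' {i}) x :=
        fun k => (continuousWithinAt_pi.1 (hg x hx) k).mono Set.inter_subset_left
      refine ContinuousWithinAt.closure_le hi (hcont i) (hcont j) ?_
      rintro y ⟨-, rfl⟩
      exact hc y j
  exact ⟨x, hx, g x (Classical.arbitrary I), fun i => (hle _ _).antisymm (hle _ _)⟩

end KKM

section Cuts

variable {m : ℕ} {s t : Fin (m + 1) → ℝ} {e f : Set ℝ}

open scoped Classical in
/-- The open pieces between consecutive cuts `t` that meet the set `e`. -/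
noncomputable def hitPieces (t : Fin (m + 1) → ℝ) (e : Set ℝ) : Finset (Fin m) :=
  Finset.univ.filter fun j => (e ∩ Set.Ioo (t j.castSucc) (t j.succ)).Nonempty

theorem mem_hitPieces {j : Fin m} :
    j ∈ hitPieces t e ↔ (e ∩ Set.Ioo (t j.castSucc) (t j.succ)).Nonempty := by
  simp [hitPieces]

theorem hitPieces_iUnion {κ : Type*} [Fintype κ] (e : κ → Set ℝ) :
    hitPieces t (⋃ i, e i) = Finset.univ.biUnion fun i => hitPieces t (e i) := by
  ext j
  simp [mem_hitPieces, Set.iUnion_inter]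

theorem card_hitPieces_le_one (ht : Monotone t) (he : e.OrdConnected) (hte : ∀ k, t k ∉ e) :
    (hitPieces t e).card ≤ 1 := by
  have not_before : ∀ i ∈ hitPieces t e, ∀ j ∈ hitPieces t e, ¬ i < j := fun i hi j hj hij => by
    obtain ⟨p, hp, -, hpi⟩ := mem_hitPieces.1 hi
    obtain ⟨q, hq, hjq, -⟩ := mem_hitPieces.1 hj
    exact hte i.succ (he.out hp hq ⟨hpi.le, (ht (Fin.succ_le_castSucc_iff.2 hij)).trans hjq.le⟩)
  exact Finset.card_le_one.2 fun i hi j hj =>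
    (not_lt.1 (not_before j hj i hi)).antisymm (not_lt.1 (not_before i hi j hj))

theorem IsDInterval.card_hitPieces_le {d : ℕ} (he : IsDInterval d e) (ht : Monotone t)
    (hte : ∀ k, t k ∉ e) : (hitPieces t e).card ≤ d := by
  obtain ⟨n, a, b, hn, -, -, rfl⟩ := he
  rw [hitPieces_iUnion]
  calc (Finset.univ.biUnion fun i => hitPieces t (Set.Icc (a i) (b i))).card
      ≤ (Finset.univ : Finset (Fin n)).card * 1 :=
        Finset.card_biUnion_le_card_mul _ _ _ fun i _ =>
          card_hitPieces_le_one ht Set.ordConnected_Icc fun k hk =>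
            hte k (Set.mem_iUnion_of_mem i hk)
    _ ≤ d := by simpa using hn

theorem IsDInterval.isCompact {d : ℕ} (he : IsDInterval d e) : IsCompact e := by
  obtain ⟨n, a, b, -, -, -, rfl⟩ := he
  exact isCompact_iUnion fun _ => isCompact_Icc

theorem exists_mem_Ioo_castSucc_succ {p : ℝ} (h₀ : t 0 < p) (hlast : p < t (Fin.last m))
    (hp : ∀ k, t k ≠ p) : ∃ j : Fin m, p ∈ Set.Ioo (t j.castSucc) (t j.succ) := by
  by_contra! h
  have lt_p : ∀ k, t k < p := Fin.induction h₀ fun j hj =>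
    (not_lt.1 fun hlt => h j ⟨hj, hlt⟩).lt_of_ne (hp _)
  exact (lt_p _).not_gt hlast

theorem hitPieces_inter_nonempty (hte : ∀ k, t k ∉ e)
    (hef : (e ∩ f ∩ Set.Ioo (t 0) (t (Fin.last m))).Nonempty) :
    (hitPieces t e ∩ hitPieces t f).Nonempty := by
  obtain ⟨p, ⟨hpe, hpf⟩, h₀, hlast⟩ := hef
  obtain ⟨j, hj⟩ := exists_mem_Ioo_castSucc_succ h₀ hlast fun k hk => hte k (hk ▸ hpe)
  exact ⟨j, Finset.mem_inter.2 ⟨mem_hitPieces.2 ⟨p, hpe, hj⟩, mem_hitPieces.2 ⟨p, hpf, hj⟩⟩⟩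

/-- The smallest distance from a cut to the set `e`. -/
noncomputable def cutGap (t : Fin (m + 1) → ℝ) (e : Set ℝ) : ℝ :=
  Finset.univ.inf' Finset.univ_nonempty fun k => Metric.infDist (t k) e

theorem cutGap_le_infDist (k : Fin (m + 1)) : cutGap t e ≤ Metric.infDist (t k) e :=
  Finset.inf'_le _ (Finset.mem_univ k)

theorem cutGap_nonneg : 0 ≤ cutGap t e :=
  Finset.le_inf' _ _ fun _ _ => Metric.infDist_nonneg

theorem cutGap_pos_iff (he : IsClosed e) (hne : e.Nonempty) :
    0 < cutGap t e ↔ ∀ k, t k ∉ e := by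
  simp [cutGap, Finset.lt_inf'_iff, he.notMem_iff_infDist_pos hne]

theorem cutGap_le_add_dist : cutGap t e ≤ cutGap s e + dist t s := by
  obtain ⟨k, -, hk⟩ := Finset.exists_mem_eq_inf' Finset.univ_nonempty
    fun k => Metric.infDist (s k) e
  calc cutGap t e ≤ Metric.infDist (t k) e := cutGap_le_infDist k
    _ ≤ Metric.infDist (s k) e + dist (t k) (s k) := Metric.infDist_le_infDist_add_dist
    _ ≤ cutGap s e + dist t s := add_le_add hk.ge (dist_le_pi_dist t s k)

theorem cutGap_le_dist_of_mem_uIcc {p : ℝ} (hp : p ∈ e) {k : Fin (m + 1)}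
    (hk : p ∈ Set.uIcc (t k) (s k)) : cutGap t e ≤ dist t s :=
  calc cutGap t e ≤ Metric.infDist (t k) e := cutGap_le_infDist k
    _ ≤ dist (t k) p := Metric.infDist_le_dist_of_mem hp
    _ ≤ dist (t k) (s k) := Real.dist_left_le_of_mem_uIcc hk
    _ ≤ dist t s := dist_le_pi_dist t s k

/-- The weight that `e` gives to the piece `j`. A piece can cease to be hit only when a cut passes
through `e`, where the gap vanishes, so this depends continuously on the cuts. -/
noncomputable def pieceWeight (t : Fin (m + 1) → ℝ) (e : Set ℝ) (j : Fin m) : ℝ :=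
  if j ∈ hitPieces t e then cutGap t e else 0

theorem pieceWeight_nonneg {j : Fin m} : 0 ≤ pieceWeight t e j := by
  unfold pieceWeight
  split_ifs
  exacts [cutGap_nonneg, le_rfl]

theorem pieceWeight_eq_zero {j : Fin m} (h : t j.succ = t j.castSucc) : pieceWeight t e j = 0 :=
  if_neg fun hj => by simp [mem_hitPieces, h] at hj

theorem cutGap_le_dist_of_mem_of_notMem_hitPieces {j : Fin m} (ht : j ∈ hitPieces t e)
    (hs : j ∉ hitPieces s e) : cutGap t e ≤ dist t s := by
  obtain ⟨p, hp, hpt⟩ := mem_hitPieces.1 ht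
  by_cases hps : s j.castSucc < p
  · have : s j.succ ≤ p := not_lt.1 fun h => hs (mem_hitPieces.2 ⟨p, hp, hps, h⟩)
    exact cutGap_le_dist_of_mem_uIcc hp (Set.mem_uIcc_of_ge this hpt.2.le)
  · exact cutGap_le_dist_of_mem_uIcc hp (Set.mem_uIcc_of_le hpt.1.le (not_lt.1 hps))

theorem lipschitzWith_pieceWeight (e : Set ℝ) (j : Fin m) :
    LipschitzWith 1 fun t => pieceWeight t e j := by
  refine LipschitzWith.of_le_add fun t s => ?_
  by_cases ht : j ∈ hitPieces t e
  · by_cases hs : j ∈ hitPieces s e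
    · simpa only [pieceWeight, if_pos ht, if_pos hs] using cutGap_le_add_dist
    · simpa only [pieceWeight, if_pos ht, if_neg hs, zero_add] using
        cutGap_le_dist_of_mem_of_notMem_hitPieces ht hs
  · simpa only [pieceWeight, if_neg ht] using add_nonneg pieceWeight_nonneg dist_nonneg

/-- The cuts of `[a, b]` into consecutive pieces of relative lengths `x`. -/
def cutPoints (a b : ℝ) (x : Fin m → ℝ) (k : Fin (m + 1)) : ℝ :=
  a + (b - a) * ∑ i with i.castSucc < k, x i

section cutPoints

variable {a b : ℝ} {x : Fin m → ℝ}

theorem cutPoints_zero : cutPoints a b x 0 = a := by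
  simp [cutPoints]

theorem cutPoints_last (hx : x ∈ stdSimplex ℝ (Fin m)) : cutPoints a b x (Fin.last m) = b := by
  simp [cutPoints, Fin.castSucc_lt_last, hx.2]

theorem monotone_cutPoints (hab : a ≤ b) (hx : 0 ≤ x) : Monotone (cutPoints a b x) := by
  intro k l hkl
  have hsub : Finset.univ.filter (fun i : Fin m => i.castSucc < k) ⊆
      Finset.univ.filter fun i => i.castSucc < l :=
    Finset.monotone_filter_right _ fun i _ hi => hi.trans_le hkl
  have := Finset.sum_le_sum_of_subset_of_nonneg hsub fun i _ _ => hx i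
  unfold cutPoints
  gcongr

theorem cutPoints_succ_eq {j : Fin m} (hj : x j = 0) :
    cutPoints a b x j.succ = cutPoints a b x j.castSucc := by
  have : Finset.univ.filter (fun i : Fin m => i.castSucc < j.succ) =
      insert j (Finset.univ.filter fun i => i.castSucc < j.castSucc) := by
    ext i
    simp [Fin.castSucc_lt_succ_iff, le_iff_eq_or_lt]
  rw [cutPoints, cutPoints, this, Finset.sum_insert (by simp), hj, zero_add]

theorem continuous_cutPoints : Continuous (cutPoints (m := m) a b) := by
  unfold cutPoints
  fun_prop

end cutPoints

theorem exists_balanced_cuts (E : Finset (Set ℝ)) (n : ℕ) {a b : ℝ} (hab : a ≤ b) :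
    ∃ t : Fin (n + 2) → ℝ, Monotone t ∧ t 0 = a ∧ t (Fin.last _) = b ∧
      ∃ c, ∀ j, ∑ e ∈ E, pieceWeight t e j = c := by
  have hcont : Continuous fun x (j : Fin (n + 1)) => ∑ e ∈ E, pieceWeight (cutPoints a b x) e j :=
    continuous_pi fun j => continuous_finsetSum _ fun e _ =>
      (lipschitzWith_pieceWeight e j).continuous.comp continuous_cutPoints
  obtain ⟨x, hx, hbal⟩ := exists_mem_stdSimplex_forall_eq hcont.continuousOn fun x _ i hi j => by
    simp only [pieceWeight_eq_zero (cutPoints_succ_eq hi), Finset.sum_const_zero]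
    exact Finset.sum_nonneg fun e _ => pieceWeight_nonneg
  exact ⟨_, monotone_cutPoints hab hx.1, cutPoints_zero, cutPoints_last hx, hbal⟩

end Cuts

theorem card_le_sq_of_balanced {E ι R : Type*} [Fintype ι] [DecidableEq ι] [CommRing R]
    [LinearOrder R] [IsStrictOrderedRing R] {s : Finset E} (hs : s.Nonempty) {φ : E → R}
    (hφ : ∀ e ∈ s, 0 < φ e) {T : E → Finset ι} {d : ℕ} (hcard : ∀ e ∈ s, (T e).card ≤ d)
    (hinter : ∀ e ∈ s, ∀ f ∈ s, (T e ∩ T f).Nonempty) {a : R}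
    (hbal : ∀ j, ∑ e ∈ s with j ∈ T e, φ e = a) : Fintype.card ι ≤ d ^ 2 := by
  have hsum : ∀ U : Finset ι, U.card * a = ∑ e ∈ s, (U ∩ T e).card * φ e := fun U =>
    calc U.card * a = ∑ j ∈ U, ∑ e ∈ s with j ∈ T e, φ e := by simp [hbal]
      _ = ∑ e ∈ s, ∑ j ∈ U, if j ∈ T e then φ e else 0 := by
        simp_rw [Finset.sum_filter]
        exact Finset.sum_comm
      _ = ∑ e ∈ s, (U ∩ T e).card * φ e := by simp [Finset.sum_ite_mem]
  have hpos : 0 < ∑ e ∈ s, φ e := Finset.sum_pos hφ hs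
  obtain ⟨f, hf⟩ := hs
  have hlower : ∑ e ∈ s, φ e ≤ (T f).card * a := by
    rw [hsum]
    refine Finset.sum_le_sum fun e he => le_mul_of_one_le_left (hφ e he).le ?_
    exact_mod_cast (hinter f hf e he).card_pos
  have hupper : Fintype.card ι * a ≤ d * ∑ e ∈ s, φ e := by
    rw [← Finset.card_univ, hsum, Finset.mul_sum]
    refine Finset.sum_le_sum fun e he => mul_le_mul_of_nonneg_right ?_ (hφ e he).le
    simpa using hcard e he
  have hTf : ((T f).card : R) ≤ d := mod_cast hcard f hf
  suffices (Fintype.card ι : R) * ∑ e ∈ s, φ e ≤ (d ^ 2 : ℕ) * ∑ e ∈ s, φ e from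
    Nat.cast_le.1 (le_of_mul_le_mul_right this hpos)
  calc (Fintype.card ι : R) * ∑ e ∈ s, φ e
      ≤ Fintype.card ι * ((T f).card * a) := by gcongr
    _ = (T f).card * (Fintype.card ι * a) := by ring
    _ ≤ (T f).card * (d * ∑ e ∈ s, φ e) := by gcongr
    _ ≤ d * (d * ∑ e ∈ s, φ e) := by gcongr
    _ = (d ^ 2 : ℕ) * ∑ e ∈ s, φ e := by push_cast; ring

theorem exists_cut_mem_of_balanced {d n : ℕ} (hn : d ^ 2 ≤ n) {E : Finset (Set ℝ)}
    (hE : ∀ e ∈ E, IsDInterval d e) (hint : ∀ e ∈ E, ∀ f ∈ E, (e ∩ f).Nonempty)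
    {t : Fin (n + 2) → ℝ} (ht : Monotone t)
    (hsub : ∀ e ∈ E, e ⊆ Set.Ioo (t 0) (t (Fin.last _))) {c : ℝ}
    (hbal : ∀ j, ∑ e ∈ E, pieceWeight t e j = c) : ∀ e ∈ E, ∃ k, t k ∈ e := by
  by_contra! h
  obtain ⟨e₀, he₀, hcut⟩ := h
  let s : Finset (Set ℝ) := {e ∈ E | 0 < cutGap t e}
  have hgap : ∀ e ∈ E, (0 < cutGap t e ↔ ∀ k, t k ∉ e) := fun e he =>
    cutGap_pos_iff (hE e he).isCompact.isClosed (hint e he e he).left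
  have mem_s : ∀ {e}, e ∈ s ↔ e ∈ E ∧ 0 < cutGap t e := Finset.mem_filter
  have uncut : ∀ e ∈ s, e ∈ E ∧ ∀ k, t k ∉ e := fun e he =>
    ⟨(mem_s.1 he).1, (hgap e (mem_s.1 he).1).1 (mem_s.1 he).2⟩
  have hcard : Fintype.card (Fin (n + 1)) ≤ d ^ 2 := by
    refine card_le_sq_of_balanced (s := s) (φ := cutGap t) (T := hitPieces t) (a := c)
      ⟨e₀, mem_s.2 ⟨he₀, (hgap e₀ he₀).2 hcut⟩⟩ (fun e he => (mem_s.1 he).2)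
      (fun e he => (hE e (uncut e he).1).card_hitPieces_le ht (uncut e he).2)
      (fun e he f hf => hitPieces_inter_nonempty (uncut e he).2 ?_) fun j => ?_
    · obtain ⟨p, hpe, hpf⟩ := hint e (uncut e he).1 f (uncut f hf).1
      exact ⟨p, ⟨hpe, hpf⟩, hsub e (uncut e he).1 hpe⟩
    · rw [← hbal j, Finset.sum_filter]
      refine Finset.sum_filter_of_ne fun e _ hne => ?_
      exact cutGap_nonneg.lt_of_ne' fun h => hne (by simp [h])
  simp only [Fintype.card_fin] at hcard
  omega

theorem exists_finset_card_le_sq_forall_exists_mem {d : ℕ} {H : Set (Set ℝ)} (hfin : H.Finite)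
    (hH : ∀ e ∈ H, IsDInterval d e) (hint : ∀ e ∈ H, ∀ f ∈ H, (e ∩ f).Nonempty) :
    ∃ C : Finset ℝ, C.card ≤ d ^ 2 ∧ ∀ e ∈ H, ∃ p ∈ C, p ∈ e := by
  classical
  lift H to Finset (Set ℝ) using hfin with E
  have hbdd : Bornology.IsBounded (⋃ e ∈ E, e) :=
    (Bornology.isBounded_biUnion_finset E).2 fun e he => (hH e he).isCompact.isBounded
  obtain ⟨R, hR, hsub⟩ := hbdd.subset_ball_lt 0 0
  rw [Real.ball_eq_Ioo, zero_sub, zero_add] at hsub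
  obtain ⟨t, ht, ht₀, htlast, c, hbal⟩ := exists_balanced_cuts E (d ^ 2) (neg_le_self hR.le)
  have subset_Ioo : ∀ e ∈ E, e ⊆ Set.Ioo (t 0) (t (Fin.last _)) := fun e he => by
    rw [ht₀, htlast]
    exact (Set.subset_biUnion_of_mem (u := fun e => e) he).trans hsub
  have hcut := exists_cut_mem_of_balanced le_rfl hH hint ht subset_Ioo hbal
  refine ⟨Finset.univ.image fun j : Fin (d ^ 2) => t j.castSucc.succ, ?_, fun e he => ?_⟩
  · simpa using Finset.card_image_le (s := Finset.univ)
      (f := fun j : Fin (d ^ 2) => t j.castSucc.succ)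
  · obtain ⟨k, hk⟩ := hcut e he
    obtain ⟨h₀, hlast⟩ := subset_Ioo e he hk
    obtain ⟨k, rfl⟩ := Fin.exists_succ_eq.2 (fun h : k = 0 => h₀.ne' (congrArg t h))
    obtain ⟨j, rfl⟩ := Fin.exists_castSucc_eq.2
      (fun h : k = Fin.last _ => hlast.ne (congrArg (t ·.succ) h))
    exact ⟨_, Finset.mem_image_of_mem _ (Finset.mem_univ j), hk⟩

theorem le_nuW {α : Type*} {H : Set (Set α)} (hfin : H.Finite) (w : Set α → ℕ) {e : Set α}
    (he : e ∈ H) : w e ≤ nuW H w := by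
  refine le_csSup ⟨∑ e ∈ hfin.toFinset, w e, ?_⟩ ⟨{e}, by simpa using he, by simp, by simp⟩
  rintro _ ⟨M, hM, -, rfl⟩
  exact Finset.sum_le_sum_of_subset fun e he => hfin.mem_toFinset.2 (hM he)

theorem tauW_le_card_mul {α : Type*} {H : Set (Set α)} {w : Set α → ℕ} {C : Finset α} {n : ℕ}
    (hC : ∀ e ∈ H, ∃ p ∈ C, p ∈ e) (hw : ∀ e ∈ H, w e ≤ n) : tauW H w ≤ C.card * n := by
  classical
  let g : α → ℕ := fun x => if x ∈ C then n else 0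
  have hsupp : Function.support g ⊆ C := fun x hx => by
    by_contra hxC
    exact hx (if_neg hxC)
  refine Nat.sInf_le ⟨g, C.finite_toSet.subset hsupp, fun e he => ?_, ?_⟩
  · obtain ⟨p, hpC, hpe⟩ := hC e he
    calc w e ≤ n := hw e he
      _ = e.indicator g p := by simp [g, hpC, hpe]
      _ ≤ ∑ᶠ x, e.indicator g x := single_le_finsum p
        (C.finite_toSet.subset (Set.support_indicator.trans_subset
          (Set.inter_subset_right.trans hsupp))) fun _ => Nat.zero_le _
      _ = ∑ᶠ x ∈ e, g x := (finsum_mem_def e g).symm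
  · rw [finsum_eq_sum_of_support_subset g hsupp, Finset.sum_ite_mem, Finset.inter_self,
      Finset.sum_const, smul_eq_mul]

/-- For a finite *intersecting* hypergraph of `d`-intervals with a weight
system `w` on its edges, `τ_w(H) ≤ d²·ν_w(H)`. -/
theorem tauW_le_d_sq_mul_nuW_of_intersecting (d : ℕ) (hd : 1 ≤ d)
    (H : Set (Set ℝ)) (hfin : H.Finite)
    (hH : ∀ e ∈ H, IsDInterval d e ∧ e.Nonempty)
    (hint : ∀ e ∈ H, ∀ f ∈ H, (e ∩ f).Nonempty) (w : Set ℝ → ℕ) :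
    tauW H w ≤ d ^ 2 * nuW H w := by
  obtain ⟨C, hcard, hC⟩ :=
    exists_finset_card_le_sq_forall_exists_mem hfin (fun e he => (hH e he).1) hint
  calc tauW H w ≤ C.card * nuW H w := tauW_le_card_mul hC fun _ he => le_nuW hfin w he
    _ ≤ d ^ 2 * nuW H w := Nat.mul_le_mul_right _ hcard
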